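/- For every integer n > 8750, the number of nice words of length n satisfies |N_n| > 1.01^n / 7.8. -/

import Mathlib

/-- A word is *square-free* if it contains no factor of the form `u ++ u`
with `u` nonempty. -/
def SqFree {α : Type*} (w : List α) : Prop :=
  ∀ u : List α, u ≠ [] → ¬ (u ++ u) <:+: w

/-- The word `p̂ = 1202120121021201021`. -/
def phat : List (Fin 3) := [1,2,0,2,1,2,0,1,2,1,0,2,1,2,0,1,0,2,1]

/-- The palindrome `p = mirror(p̂) ++ 0 ++ p̂`. -/
def pal : List (Fin 3) := phat.reverse ++ 0 :: phat

/-- The number of occurrences of a (nonempty) word `u` as a factor of `v`. -/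
def occCount (u v : List (Fin 3)) : ℕ :=
  (List.range v.length).countP (fun i => (v.drop i).take u.length == u)

/-- A word `v` is *nice* if `p v p` is square-free and contains exactly two
occurrences of `p̂` and exactly two occurrences of its mirror image. -/
def IsNice (v : List (Fin 3)) : Prop :=
  SqFree (pal ++ v ++ pal) ∧ occCount phat (pal ++ v ++ pal) = 2 ∧
    occCount phat.reverse (pal ++ v ++ pal) = 2

/-- `lword n` is the lexicographically least nice word of length `n`
(the empty word if no nice word of length `n` exists). -/
noncomputable def lword (n : ℕ) : List (Fin 3) := by
  classical
  exact if h : {w : List (Fin 3) | IsNice w ∧ w.length = n}.Nonempty then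
    Set.IsWF.min
      (Set.Finite.isWF
        ((List.finite_length_eq (Fin 3) n).subset (fun _ hw => hw.2))) h
  else []

/-- A set of words is *mirror-free* if it does not contain both a word and its
(distinct) mirror image. -/
def MirrorFree (S : Set (List (Fin 3))) : Prop :=
  ∀ w ∈ S, w ≠ w.reverse → w.reverse ∉ S

/-- `S` is an `n`-good set: a mirror-free set of nice words of length `n` such that
for all `i ∈ {2n+100, …, 7n}` and all distinct `u v ∈ S`, the words
`p u p v p lᵢ`, `p ū p v p lᵢ`, `p u p v̄ p l̄ᵢ` and `p ū p v̄ p l̄ᵢ` are square-free. -/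
def GoodSet (n : ℕ) (S : Set (List (Fin 3))) : Prop :=
  (∀ w ∈ S, IsNice w ∧ w.length = n) ∧ MirrorFree S ∧
    ∀ i : ℕ, 2 * n + 100 ≤ i → i ≤ 7 * n → ∀ u ∈ S, ∀ v ∈ S, u ≠ v →
      SqFree (pal ++ u ++ pal ++ v ++ pal ++ lword i) ∧
      SqFree (pal ++ u.reverse ++ pal ++ v ++ pal ++ lword i) ∧
      SqFree (pal ++ u ++ pal ++ v.reverse ++ pal ++ (lword i).reverse) ∧
      SqFree (pal ++ u.reverse ++ pal ++ v.reverse ++ pal ++ (lword i).reverse)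

/-- `mirrorIf r w` is the mirror image of `w` if `r = true`, and `w` itself otherwise. -/
def mirrorIf (r : Bool) (w : List (Fin 3)) : List (Fin 3) :=
  if r then w.reverse else w

/-- The nondeterministic substitution `h`. -/
def himg : Fin 3 → Set (List (Fin 3)) :=
  ![{[0,1,2,1,0,2,1,2,0,2,1,0,2,0,1,0,2,1,2,0,1,2,1,0],
     [0,1,2,1,0,2,1,2,0,2,1,0,2,0,1,2,0,2,1,2,0,1,2,1,0]},
    {[1,2,0,2,1,0,2,0,1,0,2,1,0,1,2,1,0,2,0,1,2,0,2,1],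
     [1,2,0,2,1,0,2,0,1,0,2,1,0,1,2,0,1,0,2,0,1,2,0,2,1]},
    {[2,0,1,0,2,1,0,1,2,1,0,2,1,2,0,2,1,0,1,2,0,1,0,2],
     [2,0,1,0,2,1,0,1,2,1,0,2,1,2,0,1,2,1,0,1,2,0,1,0,2]}]

/-- `v` is an image of `w` under the substitution `h`: `v` is obtained by replacing
each letter `c` of `w` by some word of `himg c`. -/
def IsImage (w v : List (Fin 3)) : Prop :=
  ∃ vs : List (List (Fin 3)), List.Forall₂ (fun c u => u ∈ himg c) w vs ∧ v = vs.flatten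

/-- Blocks: codes `2c`, `2c+1` are the two images of the letter `c`, code 6 is `pal`. -/
def blk : Fin 7 → List (Fin 3) :=
  ![[0,1,2,1,0,2,1,2,0,2,1,0,2,0,1,0,2,1,2,0,1,2,1,0],
    [0,1,2,1,0,2,1,2,0,2,1,0,2,0,1,2,0,2,1,2,0,1,2,1,0],
    [1,2,0,2,1,0,2,0,1,0,2,1,0,1,2,1,0,2,0,1,2,0,2,1],
    [1,2,0,2,1,0,2,0,1,0,2,1,0,1,2,0,1,0,2,0,1,2,0,2,1],
    [2,0,1,0,2,1,0,1,2,1,0,2,1,2,0,2,1,0,1,2,0,1,0,2],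
    [2,0,1,0,2,1,0,1,2,1,0,2,1,2,0,1,2,1,0,1,2,0,1,0,2],
    [1,2,0,1,0,2,1,2,0,1,2,1,0,2,1,2,0,2,1,0,
     1,2,0,2,1,2,0,1,2,1,0,2,1,2,0,1,0,2,1]]

/-- The letter coded by a block; 3 is the sentinel letter for `pal`. -/
def ltr : Fin 7 → Fin 4 := ![0,0,1,1,2,2,3]

/-- Allowed adjacent letters. -/
def okL (a b : Fin 4) : Bool :=
  a != b && (a != 3 || b == 0) && (b != 3 || a == 0)

/-- Allowed adjacent blocks. -/
def prs : Fin 7 → Fin 7 → Bool := fun d e => okL (ltr d) (ltr e)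

/-- The concatenation of blocks. -/
def HH (t : List (Fin 7)) : List (Fin 3) := t.flatMap blk

/-- The marker of a block. -/
def mk (i : Fin 7) : List (Fin 3) := (blk i).take 19

/-- `preB k s l`: the first `k` letters of `s` and `l` exist and agree. -/
noncomputable def preB (k : ℕ) : List (Fin 3) → List (Fin 3) → Bool :=
  Nat.rec (fun _ _ => true) (fun _ ih s l => List.rec false (fun x xs _ =>
    List.rec false (fun y ys _ => Bool.rec false (ih xs ys) (Nat.beq x.val y.val)) l) s) k

/-- A fast test for a square prefix of `s`, of period in `[k, k+f)`; the list is `s.drop k`. -/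
noncomputable def goSq (s : List (Fin 3)) (f : ℕ) : List (Fin 3) → ℕ → Bool :=
  Nat.rec (fun _ _ => false)
    (fun _ ih l k => Bool.rec (ih l.tail (Nat.succ k)) true (preB k s l)) f

/-- No square starts in the first `n` positions of the list (of length `m`). -/
noncomputable def sqfB (n : ℕ) : ℕ → List (Fin 3) → Bool :=
  Nat.rec (fun _ _ => true)
    (fun _ ih m s => Bool.rec (ih (m-1) s.tail) false (goSq s (m/2) s.tail 1)) n

/-- Evaluate a list before passing it on. -/
def force : List (Fin 3) → (List (Fin 3) → Bool) → Bool
  | [], k => k []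
  | x :: xs, k => force xs (fun l => k (x :: l))

theorem force_eq (l : List (Fin 3)) (k : List (Fin 3) → Bool) : force l k = k l := by
  induction l generalizing k with
  | nil => rfl
  | cons x xs ih => simp [force, ih]

/-- Test whether `q` (of length `m`) occurs in `s` only at allowed positions. -/
noncomputable def occB (q : List (Fin 3)) (m : ℕ) (good : ℕ → Bool) (n : ℕ) :
    ℕ → List (Fin 3) → Bool :=
  Nat.rec (fun _ _ => true)
    (fun _ ih o s => Bool.rec (ih (Nat.succ o) s.tail)
      (Bool.rec false (ih (Nat.succ o) s.tail) (good o)) (preB m q s)) n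

/-- Bounded universal quantification over blocks. -/
def all7 (f : Fin 7 → Bool) : Bool := (List.finRange 7).all f

theorem all7_spec {f : Fin 7 → Bool} (h : all7 f = true) (i : Fin 7) : f i = true := by
  unfold all7 at h
  rw [List.all_eq_true] at h
  exact h i (List.mem_finRange i)

/-- All occurrences of `q` starting in `blk d` are allowed. -/
noncomputable def occOK (q : List (Fin 3)) (good : ℕ → Fin 7 → Bool) : Bool :=
  all7 fun d => occB q q.length (fun o => good o d) (blk d).length 0 (blk d) &&
    all7 fun e => !prs d e || occB q q.length (fun o => good o d) (blk d).length 0 (blk d ++ blk e)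

set_option maxRecDepth 100000
theorem chk_single : all7 (fun d => force (blk d) (sqfB (blk d).length (blk d).length)) = true := by decide +kernel
theorem chk_pair : all7 (fun d => all7 fun e => !prs d e ||
    force (blk d ++ blk e) (sqfB (blk d).length ((blk d).length + (blk e).length))) = true := by
  decide +kernel
theorem chk_triple : all7 (fun d => all7 fun e => !prs d e ||
    all7 fun f => !prs e f || force (blk d ++ (blk e ++ mk f)) (sqfB (blk d).length ((blk d).length + ((blk e).length + 19)))) = true := by
  decide +kernel
theorem chk_mk : all7 (fun i => occOK (mk i) (fun o d => o == 0 && d == i)) = true := by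
  decide +kernel
theorem chk_phat : occOK phat (fun o d => o == 20 && d == 6) = true := by
  decide +kernel
theorem chk_phatr : occOK phat.reverse (fun o d => o == 0 && d == 6) = true := by
  decide +kernel
theorem chk_len : ∀ d : Fin 7, 24 ≤ (blk d).length := by decide
theorem chk_lcp : ∀ d f : Fin 7, d ≠ f → (blk d).take 16 ≠ (blk f).take 16 ∧
   (ltr d ≠ ltr f → (blk d).take 4 ≠ (blk f).take 4) := by decide
theorem chk_lcs : ∀ d f : Fin 7, d ≠ f → (blk d).reverse.take 16 ≠ (blk f).reverse.take 16 ∧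
   (ltr d ≠ ltr f → (blk d).reverse.take 4 ≠ (blk f).reverse.take 4) := by decide
theorem blk6 : blk 6 = pal := by decide

theorem preB_true (p a b : List (Fin 3)) : preB p.length (p ++ a) (p ++ b) = true := by
  induction p with
  | nil => rfl
  | cons x xs ih =>
    have : preB (x :: xs).length (x :: xs ++ a) (x :: xs ++ b) =
      Bool.rec false (preB xs.length (xs ++ a) (xs ++ b)) (Nat.beq x.val x.val) := rfl
    rw [this, Nat.beq_refl, ih]

theorem goSq_true (u C : List (Fin 3)) (f k : ℕ) (h1 : k ≤ u.length) (h2 : u.length < k + f) :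
    goSq (u ++ (u ++ C)) f ((u ++ (u ++ C)).drop k) k = true := by
  induction f generalizing k with
  | zero => omega
  | succ f ih =>
    have e : goSq (u ++ (u ++ C)) (f+1) ((u ++ (u ++ C)).drop k) k =
      Bool.rec (goSq (u ++ (u ++ C)) f ((u ++ (u ++ C)).drop k).tail (k+1)) true
        (preB k (u ++ (u ++ C)) ((u ++ (u ++ C)).drop k)) := rfl
    rw [e]
    rcases h1.eq_or_lt with h | h
    · subst h
      rw [List.drop_left, preB_true]
    · rw [List.tail_drop, ih (k+1) h (by omega)]
      cases preB k (u ++ (u ++ C)) ((u ++ (u ++ C)).drop k) <;> rfl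

theorem sqfB_spec (n m : ℕ) (a u C : List (Fin 3)) (hu : u ≠ [])
    (hm : m = (a ++ (u ++ (u ++ C))).length) (ha : a.length < n) :
    sqfB n m (a ++ (u ++ (u ++ C))) = false := by
  induction n generalizing m a with
  | zero => omega
  | succ n ih =>
    have e : ∀ s, sqfB (n+1) m s = 
      Bool.rec (sqfB n (m-1) s.tail) false (goSq s (m/2) s.tail 1) := fun s => rfl
    rw [e]
    have hl : 0 < u.length := List.length_pos_iff.2 hu
    cases a with
    | nil =>
      have := goSq_true u C (m/2) 1 hl (by simp at hm; omega)
      rw [List.drop_one] at this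
      simp only [List.nil_append]
      rw [this]
    | cons x xs =>
      have h := ih (m-1) xs (by simp at hm ⊢; omega) (by simpa using ha)
      simp only [List.cons_append, List.tail_cons]
      rw [h]
      generalize goSq _ _ _ _ = b
      cases b <;> rfl

theorem occB_spec (q : List (Fin 3)) (good : ℕ → Bool) (n o : ℕ) (a c : List (Fin 3))
    (h : occB q q.length good n o (a ++ (q ++ c)) = true) (ha : a.length < n) :
    good (o + a.length) = true := by
  induction n generalizing o a with
  | zero => omega
  | succ n ih =>
    have e : ∀ s, occB q q.length good (n+1) o s = 
      Bool.rec (occB q q.length good n (o+1) s.tail)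
        (Bool.rec false (occB q q.length good n (o+1) s.tail) (good o))
        (preB q.length q s) := fun s => rfl
    rw [e] at h
    cases a with
    | nil =>
      have := preB_true q [] c
      rw [List.append_nil] at this
      simp only [List.nil_append] at h
      rw [this] at h
      simp only [List.length_nil, Nat.add_zero]
      cases hg : good o
      · rw [hg] at h; simp at h
      · rfl
    | cons x xs =>
      simp only [List.cons_append, List.tail_cons] at h
      have h' : occB q q.length good n (o+1) (xs ++ (q ++ c)) = true := by
        revert h
        generalize preB _ _ _ = b
        generalize occB q q.length good n (o+1) (xs ++ (q ++ c)) = b2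
        cases b <;> cases b2 <;> cases good o <;> simp
      have := ih (o+1) xs h' (by simpa using ha)
      rw [List.length_cons, ← this]
      congr 1
      omega

/-! Structural lemmas. -/

theorem HH_nil : HH [] = [] := rfl
theorem HH_cons (d : Fin 7) (t : List (Fin 7)) : HH (d :: t) = blk d ++ HH t := by
  simp [HH]
theorem HH_append (s t : List (Fin 7)) : HH (s ++ t) = HH s ++ HH t := by
  simp [HH]

theorem HH_len (t : List (Fin 7)) : 24 * t.length ≤ (HH t).length := by
  induction t with
  | nil => simp
  | cons d t ih =>
    have := chk_len d
    rw [HH_cons, List.length_append, List.length_cons]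
    omega

theorem locate (t : List (Fin 7)) (X Y : List (Fin 3)) (h : HH t = X ++ Y) (hY : Y ≠ []) :
    ∃ t1 d t2 a b, t = t1 ++ d :: t2 ∧ blk d = a ++ b ∧ b ≠ [] ∧ X = HH t1 ++ a ∧
      Y = b ++ HH t2 := by
  induction t generalizing X with
  | nil =>
    rw [HH_nil] at h
    have := List.append_eq_nil_iff.1 h.symm
    exact absurd this.2 hY
  | cons d t ih =>
    rw [HH_cons] at h
    rcases List.append_eq_append_iff.1 h with ⟨a, h1, h2⟩ | ⟨b, h1, h2⟩
    · obtain ⟨t1, e, t2, a', b', e1, e2, e3, e4, e5⟩ := ih a h2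
      exact ⟨d :: t1, e, t2, a', b', by rw [e1]; rfl, e2, e3,
        by rw [h1, e4, HH_cons, List.append_assoc], e5⟩
    · by_cases hb : b = []
      · subst hb
        obtain ⟨t1, e, t2, a', b', e1, e2, e3, e4, e5⟩ := ih [] (by simpa using h2.symm)
        refine ⟨d :: t1, e, t2, a', b', by rw [e1]; rfl, e2, e3, ?_, by simpa using e5⟩
        rw [List.append_nil] at h1
        rw [HH_cons, List.append_assoc, ← e4, List.append_nil, h1]
      · exact ⟨[], d, t, X, b, rfl, h1, hb, by simp [HH_nil], h2⟩

theorem chain_infix {t1 t2 : List (Fin 7)} {d e : Fin 7}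
    (h : List.IsChain (fun a b => prs a b = true) (t1 ++ d :: e :: t2)) : prs d e = true := by
  have := (List.isChain_append.1 h).2.1
  exact (List.isChain_cons_cons.1 this).1

theorem occ_loc (t : List (Fin 7)) (hc : List.IsChain (fun a b => prs a b = true) t)
    (q X Y : List (Fin 3)) (good : ℕ → Fin 7 → Bool) (hok : occOK q good = true)
    (hq : q ≠ []) (hl : q.length ≤ 24) (h : HH t = X ++ (q ++ Y)) :
    ∃ t1 d t2 a, t = t1 ++ d :: t2 ∧ X = HH t1 ++ a ∧ good a.length d = true := by
  obtain ⟨t1, d, t2, a, b, e1, e2, e3, e4, e5⟩ := locate t X (q ++ Y) h (by simp [hq])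
  refine ⟨t1, d, t2, a, e1, e4, ?_⟩
  have hb : 0 < b.length := List.length_pos_iff.2 e3
  have hd := all7_spec hok d
  rw [Bool.and_eq_true] at hd
  have hal : a.length < (blk d).length := by rw [e2, List.length_append]; omega
  cases t2 with
  | nil =>
    rw [HH_nil, List.append_nil] at e5
    have := occB_spec q _ _ 0 a Y (by rw [e5, ← e2]; exact hd.1) hal
    simpa using this
  | cons e t3 =>
    have hp : prs d e = true := by subst e1; exact chain_infix hc
    have h2 := all7_spec hd.2 e
    rw [hp] at h2
    simp only [Bool.not_true, Bool.false_or] at h2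
    rw [HH_cons, ← List.append_assoc] at e5
    have hpre : q <+: b ++ blk e := by
      apply List.prefix_of_prefix_length_le (l₃ := q ++ Y)
      · exact List.prefix_append _ _
      · rw [e5]; exact List.prefix_append _ _
      · have := chk_len e
        rw [List.length_append]; omega
    obtain ⟨c, hcc⟩ := hpre
    have := occB_spec q _ _ 0 a c (by rw [hcc, ← List.append_assoc, ← e2]; exact h2) hal
    simpa using this

theorem sync (t : List (Fin 7)) (hc : List.IsChain (fun a b => prs a b = true) t)
    (i : Fin 7) (X Y : List (Fin 3)) (h : HH t = X ++ (mk i ++ Y)) :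
    ∃ t1 t2, t = t1 ++ i :: t2 ∧ X = HH t1 := by
  have hlen : (mk i).length = 19 := by
    have := chk_len i
    simp [mk]; omega
  obtain ⟨t1, d, t2, a, e1, e2, e3⟩ := occ_loc t hc (mk i) X Y _ (all7_spec chk_mk i)
    (by intro h; rw [h] at hlen; simp at hlen) (by omega) h
  simp only [Bool.and_eq_true, beq_iff_eq, List.length_eq_zero_iff] at e3
  obtain ⟨rfl, rfl⟩ := e3
  exact ⟨t1, t2, e1, by simpa using e2⟩

theorem take_eq_of_prefix {τ x y : List (Fin 3)} {k : ℕ} (hx : τ <+: x) (hy : τ <+: y)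
    (hk : k ≤ τ.length) : x.take k = y.take k := by
  obtain ⟨a, rfl⟩ := hx
  obtain ⟨b, rfl⟩ := hy
  rw [List.take_append_of_le_length hk, List.take_append_of_le_length hk]

/-- Common prefix analysis, for a general block function. -/
theorem common_pre (g : Fin 7 → List (Fin 3)) (hg : ∀ d, 24 ≤ (g d).length)
    (hd : ∀ d f : Fin 7, d ≠ f → (g d).take 16 ≠ (g f).take 16 ∧
      (ltr d ≠ ltr f → (g d).take 4 ≠ (g f).take 4))
    (v r : List (Fin 7)) (γ : List (Fin 3)) (hv : γ <+: v.flatMap g) (hr : γ <+: r.flatMap g) :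
    ∃ z v' r' k, v = z ++ v' ∧ r = z ++ r' ∧ γ.length ≤ (z.flatMap g).length + k ∧ k ≤ 15 ∧
      (3 < k → ∃ d v'' f r'', v' = d :: v'' ∧ r' = f :: r'' ∧ ltr d = ltr f) := by
  induction v generalizing r γ with
  | nil =>
    have : γ = [] := by simpa using hv
    subst this
    exact ⟨[], [], r, 0, by simp⟩
  | cons d v ih =>
    cases r with
    | nil =>
      have : γ = [] := by simpa using hr
      subst this
      exact ⟨[], d :: v, [], 0, by simp⟩
    | cons f r =>
      rw [List.flatMap_cons] at hv hr
      by_cases hdf : d = f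
      · subst hdf
        rcases List.prefix_or_prefix_of_prefix hv (List.prefix_append (g d) _) with h | h
        · exact ⟨[d], v, r, 0, by simp, by simp, by simpa using h.length_le, by simp, by simp⟩
        · obtain ⟨γ', rfl⟩ := h
          obtain ⟨z, v', r', k, h1, h2, h3, h4, h5⟩ := ih r γ'
            ((List.prefix_append_right_inj _).1 hv) ((List.prefix_append_right_inj _).1 hr)
          exact ⟨d :: z, v', r', k, by simp [h1], by simp [h2],
            by simp at h3 ⊢; omega, h4, h5⟩
      · have key : ∀ k ≤ 24, k ≤ γ.length → (g d).take k = (g f).take k := by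
          intro k hk hkl
          have := take_eq_of_prefix hv hr hkl
          rwa [List.take_append_of_le_length (hk.trans (hg d)),
            List.take_append_of_le_length (hk.trans (hg f))] at this
        refine ⟨[], d :: v, f :: r, γ.length, by simp, by simp, by simp, ?_, ?_⟩
        · by_contra hh
          exact (hd d f hdf).1 (key 16 (by omega) (by omega))
        · intro hh
          refine ⟨d, v, f, r, rfl, rfl, ?_⟩
          by_contra hne
          exact (hd d f hdf).2 hne (key 4 (by omega) (by omega))

theorem HH_reverse (t : List (Fin 7)) :
    (HH t).reverse = t.reverse.flatMap (fun d => (blk d).reverse) := by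
  induction t with
  | nil => rfl
  | cons d t ih => rw [HH_cons, List.reverse_append, ih]; simp

theorem pre_HH (v r : List (Fin 7)) (γ : List (Fin 3)) (hv : γ <+: HH v) (hr : γ <+: HH r) :
    ∃ z v' r' k, v = z ++ v' ∧ r = z ++ r' ∧ γ.length ≤ (HH z).length + k ∧ k ≤ 15 ∧
      (3 < k → ∃ d v'' f r'', v' = d :: v'' ∧ r' = f :: r'' ∧ ltr d = ltr f) :=
  common_pre blk chk_len chk_lcp v r γ hv hr

theorem suf_HH (v r : List (Fin 7)) (γ : List (Fin 3)) (hv : γ <:+ HH v) (hr : γ <:+ HH r) :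
    ∃ z v' r' k, v = v' ++ z ∧ r = r' ++ z ∧ γ.length ≤ (HH z).length + k ∧ k ≤ 15 ∧
      (3 < k → ∃ d v'' f r'', v' = v'' ++ [d] ∧ r' = r'' ++ [f] ∧ ltr d = ltr f) := by
  obtain ⟨z, v', r', k, h1, h2, h3, h4, h5⟩ := common_pre (fun d => (blk d).reverse)
    (fun d => by simpa using chk_len d) chk_lcs v.reverse r.reverse γ.reverse
    (by rw [← HH_reverse]; exact List.reverse_prefix.2 hv)
    (by rw [← HH_reverse]; exact List.reverse_prefix.2 hr)
  refine ⟨z.reverse, v'.reverse, r'.reverse, k, ?_, ?_, ?_, h4, ?_⟩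
  · rw [← List.reverse_append, ← h1, List.reverse_reverse]
  · rw [← List.reverse_append, ← h2, List.reverse_reverse]
  · have := HH_reverse z.reverse
    rw [List.reverse_reverse] at this
    rw [← this] at h3
    simpa using h3
  · intro hk
    obtain ⟨d, v'', f, r'', e1, e2, e3⟩ := h5 hk
    exact ⟨d, v''.reverse, f, r''.reverse, by simp [e1], by simp [e2], e3⟩

theorem SqFree.no {α : Type*} {w : List α} (h : SqFree w) (A u C : List α) (hu : u ≠ [])
    (e : w = A ++ (u ++ u) ++ C) : False :=
  h u hu ⟨A, C, e.symm⟩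

theorem core (t1 v r : List (Fin 7)) (hv : v ≠ []) (γ α : List (Fin 3))
    (hsf : SqFree ((t1 ++ (v ++ r)).map ltr)) (h : HH v = γ ++ α) (h1 : γ <+: HH r)
    (h2 : α <:+ HH t1) : False := by
  obtain ⟨z, v', r', k, e1, e2, e3, e4, e5⟩ := pre_HH v r γ (h ▸ List.prefix_append _ _) h1
  obtain ⟨y, v2, t', l, f1, f2, f3, f4, f5⟩ := suf_HH v t1 α (h ▸ List.suffix_append _ _) h2
  have hlen : (HH v).length = γ.length + α.length := by rw [h, List.length_append]
  have hvl : 0 < v.length := List.length_pos_iff.2 hv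
  by_cases hc : v.length ≤ z.length + y.length
  · have hs : v' <:+ y := by
      apply List.suffix_of_suffix_length_le (l₃ := v)
      · rw [e1]; exact List.suffix_append _ _
      · rw [f1]; exact List.suffix_append _ _
      · have := congrArg List.length e1
        rw [List.length_append] at this
        omega
    obtain ⟨y', hy'⟩ := hs
    refine hsf.no ((t' ++ y').map ltr) ((v' ++ z).map ltr) (r'.map ltr) ?_ ?_
    · intro h0
      have h01 := congrArg List.length h0
      have h02 := congrArg List.length e1
      simp only [List.length_map, List.length_append, List.length_nil] at h01 h02
      omega
    · rw [f2, e2, ← hy', e1]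
      simp
  · have hm : ∃ mid, v = z ++ (mid ++ y) ∧ mid ≠ [] := by
      have hs : y <:+ v' := by
        apply List.suffix_of_suffix_length_le (l₃ := v)
        · rw [f1]; exact List.suffix_append _ _
        · rw [e1]; exact List.suffix_append _ _
        · have := congrArg List.length e1
          rw [List.length_append] at this
          omega
      obtain ⟨mid, hmid⟩ := hs
      refine ⟨mid, by rw [hmid, e1], ?_⟩
      rintro rfl
      rw [List.nil_append] at hmid
      have := congrArg List.length e1
      rw [List.length_append, ← hmid] at this
      omega
    obtain ⟨mid, hmid, hne⟩ := hm
    have hl2 : (HH mid).length ≤ k + l := by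
      rw [hmid, HH_append, HH_append, List.length_append, List.length_append] at hlen
      omega
    have hl3 := HH_len mid
    have : mid.length = 1 := by
      have := List.length_pos_iff.2 hne
      omega
    obtain ⟨d, rfl⟩ := List.length_eq_one_iff.1 this
    have hkl : 3 < k ∨ 3 < l := by
      simp at hl3; omega
    rcases hkl with hk | hl
    · obtain ⟨d', v'', f, r'', g1, g2, g3⟩ := e5 hk
      have : v' = d :: y := by
        have := e1.symm.trans hmid
        simpa using this
      rw [g1] at this
      obtain ⟨rfl, rfl⟩ := List.cons.inj this
      refine hsf.no (t'.map ltr) ((v'' ++ (z ++ [d'])).map ltr) (r''.map ltr) (by simp) ?_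
      rw [f2, e2, g2, hmid]
      simp [g3]
    · obtain ⟨d', v'', f, r'', g1, g2, g3⟩ := f5 hl
      have : v2 = z ++ [d] := by
        have := f1.symm.trans (hmid.trans (List.append_assoc _ _ _).symm)
        exact List.append_cancel_right this
      rw [g1] at this
      obtain ⟨rfl, hdd⟩ := List.append_inj' this rfl
      obtain rfl : d' = d := by simpa using hdd
      refine hsf.no (r''.map ltr) ((d' :: (y ++ v'')).map ltr) (r'.map ltr) (by simp) ?_
      rw [f2, e2, g2, hmid]
      simp [g3]

theorem markerSq (t : List (Fin 7)) (hc : List.IsChain (fun a b => prs a b = true) t)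
    (hsf : SqFree (t.map ltr)) (A u C : List (Fin 3)) (hu : u ≠ [])
    (h : HH t = A ++ (u ++ (u ++ C))) (i : Fin 7) (hi : mk i <:+: u) : False := by
  obtain ⟨α, β, hab⟩ := hi
  obtain ⟨t1, t2, e1, e2⟩ := sync t hc i (A ++ α) (β ++ (u ++ C)) (by
    rw [h]; nth_rewrite 1 [← hab]; simp)
  obtain ⟨s1, s2, f1, f2⟩ := sync t hc i (A ++ (u ++ α)) (β ++ C) (by
    rw [h]; nth_rewrite 2 [← hab]; simp)
  have hul : 0 < u.length := List.length_pos_iff.2 hu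
  have hp : t1 <+: s1 := by
    rcases List.prefix_or_prefix_of_prefix (l₃ := t) (e1 ▸ List.prefix_append t1 _)
      (f1 ▸ List.prefix_append s1 _) with h | h
    · exact h
    · obtain ⟨x, rfl⟩ := h
      rw [HH_append, ← f2] at e2
      have := congrArg List.length e2
      simp at this
      omega
  obtain ⟨v, rfl⟩ := hp
  have hv : v ≠ [] := by
    rintro rfl
    rw [List.append_nil, ← e2] at f2
    have := congrArg List.length f2
    simp only [List.length_append] at this
    omega
  have hHv : HH v = mk i ++ β ++ α := by
    rw [HH_append, ← e2, ← hab] at f2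
    simpa using f2.symm
  rw [List.append_assoc] at f1
  refine core t1 v (i :: s2) hv (mk i ++ β) α (f1 ▸ hsf) hHv ?_ ⟨A, e2⟩
  rw [f1, HH_append, HH_append, ← e2, hHv, ← hab] at h
  refine ⟨C, ?_⟩
  simpa using h.symm

theorem mainSq (t : List (Fin 7)) (hc : List.IsChain (fun a b => prs a b = true) t)
    (hsf : SqFree (t.map ltr)) : SqFree (HH t) := by
  rintro u hu ⟨A, C, h0⟩
  have h : HH t = A ++ (u ++ (u ++ C)) := by rw [← h0]; simp
  have hno : ∀ i, ¬ mk i <:+: u := fun i hi => markerSq t hc hsf A u C hu h i hi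
  have hmk : ∀ i, (mk i).length = 19 := by
    intro i
    have := chk_len i
    simp [mk]; omega
  obtain ⟨t1, d, t2, a, b, e1, e2, e3, e4, e5⟩ := locate t A (u ++ (u ++ C)) h (by simp [hu])
  have hb : 0 < b.length := List.length_pos_iff.2 e3
  have had : a.length < (blk d).length := by rw [e2, List.length_append]; omega
  match t2, e1, e5 with
  | [], e1, e5 =>
    have hs := all7_spec chk_single d
    rw [force_eq] at hs
    rw [HH_nil, List.append_nil] at e5
    rw [← e5] at e2
    have := sqfB_spec (blk d).length (blk d).length a u C hu (by rw [← e2]) had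
    rw [← e2, hs] at this
    cases this
  | [e], e1, e5 =>
    have hp : prs d e = true := by subst e1; exact chain_infix hc
    have hs := all7_spec (all7_spec chk_pair d) e
    rw [force_eq, hp] at hs
    simp only [Bool.not_true, Bool.false_or] at hs
    rw [HH_cons, HH_nil, List.append_nil] at e5
    have e6 : blk d ++ blk e = a ++ (u ++ (u ++ C)) := by rw [e5, e2, List.append_assoc]
    have := sqfB_spec (blk d).length ((blk d).length + (blk e).length) a u C hu
      (by rw [← e6, List.length_append]) had
    rw [← e6, hs] at this
    cases this
  | e :: f :: t3, e1, e5 =>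
    have hp : prs d e = true := by subst e1; exact chain_infix hc
    have hp2 : prs e f = true := by
      rw [e1, ← List.singleton_append, ← List.append_assoc] at hc; exact chain_infix hc
    have hs := all7_spec (all7_spec chk_triple d) e
    rw [hp] at hs
    simp only [Bool.not_true, Bool.false_or] at hs
    have hs := all7_spec hs f
    rw [hp2, force_eq] at hs
    simp only [Bool.not_true, Bool.false_or] at hs
    rw [HH_cons, HH_cons] at e5
    have me : mk e ++ (blk e).drop 19 = blk e := List.take_append_drop _ _
    have mf : mk f ++ (blk f).drop 19 = blk f := List.take_append_drop _ _
    have hle := chk_len e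
    have hme := hmk e
    have hmf := hmk f
    by_cases c1 : b.length + 19 ≤ u.length
    · apply hno e
      have : b ++ mk e <+: u := by
        apply List.prefix_of_prefix_length_le (l₃ := u ++ (u ++ C))
        · rw [e5, ← me]
          exact ⟨(blk e).drop 19 ++ (blk f ++ HH t3), by simp⟩
        · exact List.prefix_append _ _
        · rw [List.length_append]; omega
      exact (List.suffix_append b (mk e)).isInfix.trans this.isInfix
    · by_cases c2 : b.length + (blk e).length + 19 ≤ 2 * u.length
      · apply hno f
        have h1 : b ++ blk e ++ mk f <+: u ++ u := by
          apply List.prefix_of_prefix_length_le (l₃ := u ++ (u ++ C))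
          · rw [e5, ← mf]
            exact ⟨(blk f).drop 19 ++ HH t3, by simp⟩
          · exact ⟨C, by simp⟩
          · simp only [List.length_append]; omega
        have h2 : u <+: b ++ blk e := by
          apply List.prefix_of_prefix_length_le (l₃ := u ++ u)
          · exact List.prefix_append _ _
          · exact (List.prefix_append _ _).trans h1
          · simp only [List.length_append]; omega
        obtain ⟨x, hx⟩ := h2
        rw [← hx, List.append_assoc] at h1
        have h3 := (List.prefix_append_right_inj _).1 h1
        exact (List.suffix_append x (mk f)).isInfix.trans h3.isInfix
      · have h1 : u ++ u <+: b ++ (blk e ++ mk f) := by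
          apply List.prefix_of_prefix_length_le (l₃ := u ++ (u ++ C))
          · exact ⟨C, by simp⟩
          · rw [e5, ← mf]
            exact ⟨(blk f).drop 19 ++ HH t3, by simp⟩
          · simp only [List.length_append]; omega
        obtain ⟨C', hC⟩ := h1
        have e6 : blk d ++ (blk e ++ mk f) = a ++ (u ++ (u ++ C')) := by
          rw [e2, List.append_assoc, ← hC]; simp
        have := sqfB_spec (blk d).length ((blk d).length + ((blk e).length + 19)) a u C' hu
          (by rw [← e6]; simp only [List.length_append]; rw [hmf]) had
        rw [← e6, hs] at this
        cases this

/-- The code of the `b`-variant of the image of `c`. -/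
def enc (c : Fin 3) (b : Bool) : Fin 7 := if b then ![1,3,5] c else ![0,2,4] c

theorem enc_ltr : ∀ c b, ltr (enc c b) = c.castSucc := by decide
theorem enc_len : ∀ c b, (blk (enc c b)).length = 24 + b.toNat := by decide
theorem enc_ne6 : ∀ c b, enc c b ≠ 6 := by decide
theorem enc_inj : ∀ c b b', enc c b = enc c b' → b = b' := by decide
theorem okL_cast : ∀ a b : Fin 3, a ≠ b → okL a.castSucc b.castSucc = true := by decide

theorem enw_ltr (w : List (Fin 3)) (bs : List Bool) (h : w.length = bs.length) :
    (List.zipWith enc w bs).map ltr = w.map Fin.castSucc := by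
  induction w generalizing bs with
  | nil => simp
  | cons c w ih =>
    cases bs with
    | nil => simp at h
    | cons b bs => simp [enc_ltr, ih bs (by simpa using h)]

theorem enw_len (w : List (Fin 3)) (bs : List Bool) (h : w.length = bs.length) :
    (HH (List.zipWith enc w bs)).length = 24 * w.length + bs.count true := by
  induction w generalizing bs with
  | nil =>
    have : bs = [] := List.length_eq_zero_iff.1 h.symm
    simp [HH, this]
  | cons c w ih =>
    cases bs with
    | nil => simp at h
    | cons b bs =>
      rw [List.zipWith_cons_cons, HH_cons, List.length_append, ih bs (by simpa using h), enc_len]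
      cases b <;> simp <;> omega

theorem enw_inj (w : List (Fin 3)) (bs bs' : List Bool) (h : w.length = bs.length)
    (h' : w.length = bs'.length) (he : HH (List.zipWith enc w bs) = HH (List.zipWith enc w bs')) :
    bs = bs' := by
  induction w generalizing bs bs' with
  | nil =>
    rw [List.length_eq_zero_iff.1 h.symm, List.length_eq_zero_iff.1 h'.symm]
  | cons c w ih =>
    cases bs with
    | nil => simp at h
    | cons b bs =>
      cases bs' with
      | nil => simp at h'
      | cons b' bs' =>
        rw [List.zipWith_cons_cons, List.zipWith_cons_cons, HH_cons, HH_cons] at he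
        have hb : b = b' := by
          by_contra hne
          have h1 := chk_len (enc c b)
          have h2 := chk_len (enc c b')
          apply (chk_lcp (enc c b) (enc c b') (fun h => hne (enc_inj c b b' h))).1
          have := congrArg (List.take 16) he
          rwa [List.take_append_of_le_length (by omega),
            List.take_append_of_le_length (by omega)] at this
        subst hb
        rw [ih bs bs' (by simpa using h) (by simpa using h') (List.append_cancel_left he)]

theorem SqFree.map_inj {α β : Type*} {w : List α} (h : SqFree w) (f : α → β)
    (hf : Function.Injective f) : SqFree (w.map f) := by
  rintro u hu ⟨A, C, e⟩
  obtain ⟨w1, w2, rfl, h1, h2⟩ := List.map_eq_append_iff.1 e.symm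
  obtain ⟨w3, w4, rfl, h3, h4⟩ := List.map_eq_append_iff.1 h1
  obtain ⟨w5, w6, rfl, h5, h6⟩ := List.map_eq_append_iff.1 h4
  have : w5 = w6 := List.map_injective_iff.2 hf (h5.trans h6.symm)
  subst this
  exact h w5 (by rintro rfl; exact hu (by simpa using h5.symm)) ⟨w3, w2, rfl⟩

theorem SqFree.infix {α : Type*} {w x : List α} (h : SqFree w) (hx : x <:+: w) : SqFree x :=
  fun u hu hi => h u hu (hi.trans hx)

theorem SqFree.chain {α : Type*} {w : List α} (h : SqFree w) :
    List.IsChain (fun a b => a ≠ b) w := by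
  induction w with
  | nil => simp
  | cons x w ih =>
    rw [List.isChain_cons]
    refine ⟨?_, ih (h.infix (List.suffix_cons x w).isInfix)⟩
    intro y hy hxy
    cases w with
    | nil => simp at hy
    | cons z w =>
      simp at hy
      subst hy hxy
      exact h [x] (by simp) ⟨[], w, by simp⟩

theorem chain_okL (w : List (Fin 3)) (h : SqFree w) :
    List.IsChain (fun a b => okL a b = true) (w.map Fin.castSucc) := by
  rw [List.isChain_map]
  exact h.chain.imp (fun a b => okL_cast a b)

theorem sentinel (w : List (Fin 3)) (h : SqFree w) (hne : w ≠ []) :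
    SqFree ((3 : Fin 4) :: (w.map Fin.castSucc ++ [3])) := by
  have h3 : (3 : Fin 4) ∉ w.map Fin.castSucc := by
    intro hm
    obtain ⟨a, -, ha⟩ := List.mem_map.1 hm
    revert ha
    revert a
    decide
  have hW : SqFree (w.map Fin.castSucc) := h.map_inj _ (Fin.castSucc_injective 3)
  have hWne : w.map Fin.castSucc ≠ [] := by simpa using hne
  generalize w.map Fin.castSucc = W at *
  rintro u hu ⟨A, C, e⟩
  cases A with
  | nil =>
    cases u with
    | nil => exact hu rfl
    | cons x u =>
      simp only [List.nil_append, List.cons_append, List.append_assoc, List.cons.injEq] at e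
      obtain ⟨rfl, e⟩ := e
      rcases List.append_eq_append_iff.1 e with ⟨a, e1, e2⟩ | ⟨a, e1, e2⟩
      · cases a with
        | nil =>
          simp at e1 e2
          exact hWne (by rw [e1, e2.1])
        | cons y a =>
          simp at e2
          exact h3 (by rw [e1, ← e2.1]; simp)
      · cases a with
        | nil =>
          simp at e1 e2
          exact hWne (by rw [← e1, e2.1])
        | cons y a =>
          simp at e2
  | cons x A =>
    simp only [List.cons_append, List.cons.injEq] at e
    obtain ⟨rfl, e⟩ := e
    rcases List.eq_nil_or_concat C with rfl | ⟨C, c, rfl⟩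
    · rcases List.eq_nil_or_concat u with rfl | ⟨u, c, rfl⟩
      · exact hu rfl
      · have e' : (A ++ (u ++ [c]) ++ u) ++ [c] = W ++ [3] := by rw [← e]; simp
        obtain ⟨e1, e2⟩ := List.append_inj' e' rfl
        simp at e2
        subst e2
        exact h3 (by rw [← e1]; simp)
    · have e' : (A ++ (u ++ u) ++ C) ++ [c] = W ++ [3] := by rw [← e]; simp
      obtain ⟨e1, e2⟩ := List.append_inj' e' rfl
      exact hW u hu ⟨A, C, e1⟩

theorem mainPlain (w : List (Fin 3)) (h : SqFree w) (bs : List Bool) (hl : w.length = bs.length) :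
    SqFree (HH (List.zipWith enc w bs)) := by
  have := enw_ltr w bs hl
  apply mainSq
  · have h2 := chain_okL w h
    rw [← this, List.isChain_map] at h2
    exact h2
  · rw [this]; exact h.map_inj _ (Fin.castSucc_injective 3)

theorem count_two (P : ℕ → Bool) (n a b : ℕ) (ha : a < n) (hb : b < n) (hab : a ≠ b)
    (h : ∀ i, i < n → (P i = true ↔ i = a ∨ i = b)) : (List.range n).countP P = 2 := by
  have h1 : (List.range n).countP P = Nat.count (fun i => P i = true) n := by
    simp [Nat.count]
  rw [h1, Nat.count_eq_card_filter_range]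
  have : (Finset.range n).filter (fun i => P i = true) = {a, b} := by
    ext i
    simp only [Finset.mem_filter, Finset.mem_range, Finset.mem_insert, Finset.mem_singleton]
    constructor
    · rintro ⟨h2, h3⟩; exact (h i h2).1 h3
    · rintro (rfl | rfl)
      · exact ⟨ha, (h _ ha).2 (Or.inl rfl)⟩
      · exact ⟨hb, (h _ hb).2 (Or.inr rfl)⟩
  rw [this, Finset.card_pair hab]

theorem split6 (s t1 t2 : List (Fin 7)) (hs : 6 ∉ s) (h : (6 :: (s ++ [6])) = t1 ++ 6 :: t2) :
    t1 = [] ∨ t1 = 6 :: s := by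
  cases t1 with
  | nil => exact Or.inl rfl
  | cons x t1 =>
    right
    simp only [List.cons_append, List.cons.injEq] at h
    obtain ⟨rfl, h⟩ := h
    congr 1
    rcases List.append_eq_append_iff.1 h with ⟨a, e1, e2⟩ | ⟨a, e1, e2⟩
    · cases a with
      | nil => simpa using e1
      | cons y a => simp at e2
    · cases a with
      | nil => simpa using e1.symm
      | cons y a =>
        simp at e2
        exact absurd (by rw [e1, ← e2.1]; simp) hs

theorem occ_two (s : List (Fin 7)) (hs : 6 ∉ s)
    (hc : List.IsChain (fun a b => prs a b = true) (6 :: (s ++ [6])))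
    (q p1 p2 : List (Fin 3)) (hq : q.length = 19) (k : ℕ) (hk : p1.length = k)
    (hp : pal = p1 ++ (q ++ p2))
    (hok : occOK q (fun o d => o == k && d == 6) = true) :
    occCount q (pal ++ HH s ++ pal) = 2 := by
  have hW : HH (6 :: (s ++ [6])) = pal ++ HH s ++ pal := by
    rw [HH_cons, HH_append, HH_cons, HH_nil, blk6]; simp
  have hpl : pal.length = k + 19 + p2.length := by rw [hp]; simp; omega
  have hpos : ∀ (i : ℕ) (X Y : List (Fin 3)), X.length = i → pal ++ HH s ++ pal = X ++ (q ++ Y) →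
      ((pal ++ HH s ++ pal).drop i).take q.length = q := by
    intro i X Y hi e
    rw [e, ← hi, List.drop_left, List.take_left]
  unfold occCount
  apply count_two _ _ k (pal.length + (HH s).length + k)
  · simp; omega
  · simp; omega
  · omega
  · intro i hi
    rw [beq_iff_eq]
    constructor
    · intro e
      have h1 : HH (6 :: (s ++ [6])) = (pal ++ HH s ++ pal).take i ++
          (q ++ ((pal ++ HH s ++ pal).drop i).drop q.length) := by
        have h2 := List.take_append_drop q.length ((pal ++ HH s ++ pal).drop i)
        rw [e] at h2
        rw [hW, h2, List.take_append_drop]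
      obtain ⟨t1, d, t2, a, e1, e2, e3⟩ := occ_loc _ hc q _ _ _ hok
        (by rintro rfl; simp at hq) (by omega) h1
      simp only [Bool.and_eq_true, beq_iff_eq] at e3
      obtain ⟨e3, rfl⟩ := e3
      have e4 := congrArg List.length e2
      rw [List.length_take, min_eq_left hi.le, List.length_append] at e4
      rcases split6 s t1 t2 hs e1 with rfl | rfl
      · left; simp [HH_nil] at e4; omega
      · right; rw [HH_cons, blk6, List.length_append] at e4; omega
    · rintro (rfl | rfl)
      · exact hpos _ p1 (p2 ++ HH s ++ pal) hk (by nth_rewrite 1 [hp]; simp)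
      · exact hpos _ (pal ++ HH s ++ p1) p2 (by simp; omega) (by nth_rewrite 2 [hp]; simp)

theorem nice_of (w : List (Fin 3)) (h : SqFree w) (h0 : w.head? = some 0)
    (h1 : w.getLast? = some 0) (bs : List Bool) (hl : w.length = bs.length) :
    IsNice (HH (List.zipWith enc w bs)) := by
  have hm := enw_ltr w bs hl
  have hne : w ≠ [] := by rintro rfl; simp at h0
  have hm2 : (6 :: (List.zipWith enc w bs ++ [6])).map ltr = 3 :: (w.map Fin.castSucc ++ [3]) := by
    rw [List.map_cons, List.map_append, hm]; rfl
  have hs : 6 ∉ List.zipWith enc w bs := by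
    intro hmem
    have : ltr 6 ∈ (List.zipWith enc w bs).map ltr := List.mem_map_of_mem hmem
    rw [hm] at this
    obtain ⟨a, -, ha⟩ := List.mem_map.1 this
    revert ha
    revert a
    decide
  have hc : List.IsChain (fun a b => prs a b = true) (6 :: (List.zipWith enc w bs ++ [6])) := by
    have : List.IsChain (fun a b => okL a b = true)
        ((6 :: (List.zipWith enc w bs ++ [6])).map ltr) := by
      rw [hm2, List.isChain_cons, List.isChain_append]
      refine ⟨?_, chain_okL w h, by simp, ?_⟩
      · cases w with
        | nil => exact absurd rfl hne
        | cons c w =>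
          simp at h0
          subst h0
          simp
          decide
      · rw [List.getLast?_map, h1]
        simp
        decide
    rw [List.isChain_map] at this
    exact this
  refine ⟨?_, ?_, ?_⟩
  · have := mainSq _ hc (by rw [hm2]; exact sentinel w h hne)
    rw [HH_cons, HH_append, HH_cons, HH_nil, blk6] at this
    simpa using this
  · exact occ_two _ hs hc phat (phat.reverse ++ [0]) [] (by decide) 20 (by decide) (by decide)
      chk_phat
  · exact occ_two _ hs hc phat.reverse [] (0 :: phat) (by decide) 0 (by decide) (by decide)
      chk_phatr

theorem exists_long (k : ℕ) : ∃ x : List (Fin 3), SqFree x ∧ x.head? = some 0 ∧ k ≤ x.length := by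
  induction k with
  | zero =>
    refine ⟨[0], ?_, rfl, by simp⟩
    rintro u hu hi
    have h1 := hi.length_le
    have h2 := List.length_pos_iff.2 hu
    simp at h1
    omega
  | succ k ih =>
    obtain ⟨x, h1, h2, h3⟩ := ih
    have hl : x.length = (List.replicate x.length false).length := by simp
    refine ⟨_, mainPlain x h1 (List.replicate x.length false) hl, ?_, ?_⟩
    · cases x with
      | nil => simp at h2
      | cons c x =>
        simp at h2
        subst h2
        rw [List.length_cons, List.replicate_succ, List.zipWith_cons_cons, HH_cons]
        rfl
    · rw [enw_len x _ hl]
      have : 0 < x.length := by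
        cases x with
        | nil => simp at h2
        | cons c x => simp
      omega

theorem four_zero : ∀ a b c d : Fin 3, a ≠ 0 → b ≠ 0 → c ≠ 0 → d ≠ 0 →
    a = b ∨ b = c ∨ c = d ∨ (a = c ∧ b = d) := by decide

theorem exists_w (M : ℕ) (hM : 4 ≤ M) : ∃ w : List (Fin 3), SqFree w ∧ w.head? = some 0 ∧
    w.getLast? = some 0 ∧ M ≤ w.length + 3 ∧ w.length ≤ M := by
  obtain ⟨x, h1, h2, h3⟩ := exists_long M
  have hlt : ∀ i, i < 4 → M - 4 + i < x.length := by intro i hi; omega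
  have hx : ∀ i, (hi : i < 4) → x[M - 4 + i]'(hlt i hi) = 0 → ∃ w : List (Fin 3), SqFree w ∧
      w.head? = some 0 ∧ w.getLast? = some 0 ∧ M ≤ w.length + 3 ∧ w.length ≤ M := by
    intro i hi h0
    have hli := hlt i hi
    refine ⟨x.take (M - 4 + i + 1), h1.infix (List.take_prefix _ _).isInfix, ?_, ?_, ?_, ?_⟩
    · rw [List.head?_take]; simp [h2]
    · rw [List.getLast?_take]
      simp [List.getElem?_eq_getElem hli, h0]
    · rw [List.length_take]; omega
    · rw [List.length_take]; omega
  by_contra hcon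
  have a0 : x[M-4+0]'(hlt 0 (by omega)) ≠ 0 := fun h => hcon (hx 0 (by omega) h)
  have a1 : x[M-4+1]'(hlt 1 (by omega)) ≠ 0 := fun h => hcon (hx 1 (by omega) h)
  have a2 : x[M-4+2]'(hlt 2 (by omega)) ≠ 0 := fun h => hcon (hx 2 (by omega) h)
  have a3 : x[M-4+3]'(hlt 3 (by omega)) ≠ 0 := fun h => hcon (hx 3 (by omega) h)
  have hdec : ∃ C, x = x.take (M-4) ++ (x[M-4+0]'(hlt 0 (by omega)) :: x[M-4+1]'(hlt 1 (by omega)) ::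
      x[M-4+2]'(hlt 2 (by omega)) :: x[M-4+3]'(hlt 3 (by omega)) :: C) := by
    refine ⟨x.drop (M-4+4), ?_⟩
    conv_lhs => rw [← List.take_append_drop (M-4) x]
    congr 1
    have d0 := List.drop_eq_getElem_cons (hlt 0 (by omega))
    have d1 := List.drop_eq_getElem_cons (hlt 1 (by omega))
    have d2 := List.drop_eq_getElem_cons (hlt 2 (by omega))
    have d3 := List.drop_eq_getElem_cons (hlt 3 (by omega))
    change List.drop (M - 4) x = _ :: List.drop (M - 4 + 1) x at d0
    rw [d0, d1]
    congr 2
    exact d2.trans (congrArg _ d3)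
  obtain ⟨C, hC⟩ := hdec
  generalize x[M-4+0]'(hlt 0 (by omega)) = a at *
  generalize x[M-4+1]'(hlt 1 (by omega)) = b at *
  generalize x[M-4+2]'(hlt 2 (by omega)) = c at *
  generalize x[M-4+3]'(hlt 3 (by omega)) = d at *
  generalize x.take (M-4) = A at *
  rcases four_zero a b c d a0 a1 a2 a3 with rfl | rfl | rfl | ⟨rfl, rfl⟩
  · exact h1.no A [a] (c :: d :: C) (by simp) (by simpa using hC)
  · exact h1.no (A ++ [a]) [b] (d :: C) (by simp) (by simpa using hC)
  · exact h1.no (A ++ [a, b]) [c] C (by simp) (by simpa using hC)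
  · exact h1.no A [a, b] C (by simp) (by simpa using hC)

/-- The list of variant choices. -/
def chs {q : ℕ} (c : Fin q → Bool) (t r : ℕ) : List Bool :=
  (List.ofFn c).flatMap (fun x => [x, !x]) ++ (List.replicate t true ++ List.replicate r false)

theorem fm_len (l : List Bool) : (l.flatMap (fun x => [x, !x])).length = 2 * l.length := by
  induction l with
  | nil => rfl
  | cons x l ih => rw [List.flatMap_cons, List.length_append, ih]; simp; omega

theorem fm_count (l : List Bool) : (l.flatMap (fun x => [x, !x])).count true = l.length := by
  induction l with
  | nil => rfl
  | cons x l ih => rw [List.flatMap_cons, List.count_append, ih]; cases x <;> simp <;> omega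

theorem fm_inj (l l' : List Bool)
    (h : l.flatMap (fun x => [x, !x]) = l'.flatMap (fun x => [x, !x])) : l = l' := by
  induction l generalizing l' with
  | nil => cases l' with
    | nil => rfl
    | cons x l' => simp at h
  | cons x l ih => cases l' with
    | nil => simp at h
    | cons x' l' =>
      simp at h
      rw [h.1, ih l' h.2]

theorem count_lower (n m q t r : ℕ) (w : List (Fin 3)) (h : SqFree w) (h0 : w.head? = some 0)
    (h1 : w.getLast? = some 0) (hw : w.length = m) (hm : m = 2 * q + (t + r))
    (hn : n = 24 * m + (q + t)) :
    2 ^ q ≤ {w : List (Fin 3) | IsNice w ∧ w.length = n}.ncard := by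
  have hl : ∀ c : Fin q → Bool, w.length = (chs c t r).length := by
    intro c
    rw [chs, List.length_append, fm_len]
    simp; omega
  let F : (Fin q → Bool) → List (Fin 3) := fun c => HH (List.zipWith enc w (chs c t r))
  have hF : Function.Injective F := by
    intro c c' hcc
    have := enw_inj w _ _ (hl c) (hl c') hcc
    exact List.ofFn_injective (fm_inj _ _ (List.append_cancel_right this))
  have hcard : (F '' Set.univ).ncard = 2 ^ q := by
    rw [Set.ncard_image_of_injective _ hF, Set.ncard_univ]
    simp
  rw [← hcard]
  apply Set.ncard_le_ncard
  · rintro _ ⟨c, -, rfl⟩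
    refine ⟨nice_of w h h0 h1 _ (hl c), ?_⟩
    have := enw_len w _ (hl c)
    change (HH _).length = n
    rw [this, chs, List.count_append, fm_count]
    simp [List.count_replicate]
    omega
  · exact (List.finite_length_eq (Fin 3) n).subset (fun _ hw => hw.2)

theorem pow_bound (q : ℕ) (hq : 128 ≤ q) : (1.01 : ℝ) ^ (49 * (q + 51)) ≤ 2 ^ q := by
  induction q, hq using Nat.le_induction with
  | base =>
    rw [pow_mul]
    have h1 : (1.01 : ℝ) ^ 49 ≤ 1.6284 := by norm_num
    refine (pow_le_pow_left₀ (by positivity) h1 _).trans ?_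
    norm_num
  | succ q hq ih =>
    have e : 49 * (q + 1 + 51) = 49 * (q + 51) + 49 := by ring
    rw [e, pow_add, pow_succ 2 q]
    have : (1.01 : ℝ) ^ 49 ≤ 2 := by norm_num
    exact mul_le_mul ih this (by positivity) (by positivity)

theorem exists_q (n : ℕ) (hn : 8750 < n) : ∃ q, 128 ≤ q ∧ n ≤ 49 * (q + 51) ∧
    2 ^ q ≤ {w : List (Fin 3) | IsNice w ∧ w.length = n}.ncard := by
  obtain ⟨w, h1, h2, h3, h4, h5⟩ := exists_w (2 * n / 49 + 2) (by omega)
  obtain ⟨j, hj⟩ : ∃ j, n = 24 * w.length + j := ⟨n - 24 * w.length, by omega⟩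
  have hjm : j ≤ w.length := by omega
  rcases le_total (2 * j) w.length with h | h
  · refine ⟨j, by omega, by omega, ?_⟩
    exact count_lower n w.length j 0 (w.length - 2 * j) w h1 h2 h3 rfl (by omega) (by omega)
  · refine ⟨w.length - j, by omega, by omega, ?_⟩
    exact count_lower n w.length (w.length - j) (2 * j - w.length) 0 w h1 h2 h3 rfl
      (by omega) (by omega)

/-- For every `n > 8750`, the number of nice words of length `n` is greater
than `1.01 ^ n / 7.8`. -/
theorem nice_count_lower_bound (n : ℕ) (hn : 8750 < n) :
    (1.01 : ℝ) ^ n / 7.8 <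
      ({w : List (Fin 3) | IsNice w ∧ w.length = n}.ncard : ℝ) := by
  obtain ⟨q, h1, h2, h3⟩ := exists_q n hn
  have h4 : (1.01 : ℝ) ^ n ≤ 2 ^ q :=
    (pow_le_pow_right₀ (by norm_num) h2).trans (pow_bound q h1)
  have h5 : (2 : ℝ) ^ q ≤ ({w : List (Fin 3) | IsNice w ∧ w.length = n}.ncard : ℝ) := by
    exact_mod_cast h3
  have h6 : (0 : ℝ) < 1.01 ^ n := by positivity
  have h7 : (1.01 : ℝ) ^ n / 7.8 < 1.01 ^ n := div_lt_self h6 (by norm_num)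
  linarith
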